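/- Let B ⊆ A be an inclusion of simple unital C*-algebras with common unit admitting a finite-index conditional expectation E : A → B, and let C := C*(B ∪ C_A(B)). If θ is a *-automorphism of C with θ(B) = B whose restriction to B is an outer automorphism of B, then θ is a free automorphism of C. -/

import Mathlib

/-!
Let `σ` be the restriction of `θ` to `B`. If `a ∈ C` satisfies `a b = σ(b) a` for all `b ∈ B`, then
so does `E(a c) ∈ B` for every `c ∈ C_A(B)`, because `E` is `B`-bimodular and `c` commutes with `B`.
In a simple C*-algebra the centre consists of scalars, so a nonzero `y ∈ B` with `y b = σ(b) y` is a
multiple of a unitary (`y* y` and `y y*` are central), and `σ` would be inner. Hence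
`E(a c b) = E(a c) b = 0`. The products `c b` span a dense subspace of `C`, so `E(a x) = 0` for all
`x ∈ C`; taking `x = a*`, faithfulness of `E` gives `a = 0`.

Finite index makes `E` faithful: if `E(x x*) = 0`, then the Kadison inequality
`E(y)* E(y) ≤ E(y* y)` for `y = (x z)*` and `x z z* x* ≤ ‖z‖² x x*` give `E(x z) = 0` for all `z`,
and `x = ∑ E(x λᵢ) λᵢ* = 0`.
-/

namespace RegularInclusion

variable {A : Type*} [NormedRing A] [StarRing A] [CStarRing A] [CompleteSpace A]
  [NormedAlgebra ℂ A] [StarModule ℂ A]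

/-- A conditional expectation of `A` onto the subset `B`: a `ℂ`-linear positive
`B`-bimodular projection of `A` onto `B`. -/
def IsCondExp (B : Set A) (E : A →ₗ[ℂ] A) : Prop :=
  (∀ x, E x ∈ B) ∧ (∀ b ∈ B, E b = b) ∧
  (∀ x, ∃ y, E (star x * x) = star y * y) ∧
  (∀ b₁ ∈ B, ∀ b₂ ∈ B, ∀ x, E (b₁ * x * b₂) = b₁ * E x * b₂)

/-- `l` is a right quasi-basis for `E`, witnessing finite index. -/
def IsRightQB (E : A →ₗ[ℂ] A) {n : ℕ} (l : Fin n → A) : Prop :=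
  ∀ x, x = ∑ i, E (x * l i) * star (l i)

/-- The centralizer (relative commutant) `C_A(B)` of `B` in `A`. -/
def cent (B : Set A) : Set A := {x | ∀ b ∈ B, x * b = b * x}

/-- The normalizer `N_A(B) = {u ∈ U(A) : uBu* = B}` of `B` in `A`. -/
def normalizer (B : Set A) : Set A :=
  {u | u ∈ unitary A ∧ (fun x => u * x * star u) '' B = B}

/-- The set `U(B)` of unitaries of `B`. -/
def UB (B : Set A) : Set A := {b | b ∈ B ∧ b ∈ unitary A}

/-- The set `U(B)·U(C_A(B))` of products of a unitary of `B` and a unitary of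
the centralizer of `B`. -/
def UBC (B : Set A) : Set A :=
  {x | ∃ b c, b ∈ B ∧ b ∈ unitary A ∧ c ∈ cent B ∧ c ∈ unitary A ∧ x = b * c}

/-- Simplicity of the C*-algebra (given as the subset `S` of `A`): the only closed
two-sided ideals of `S` are `{0}` and `S`. -/
def IsSimpleCStar (S : Set A) : Prop :=
  ∀ I : Set A, I ⊆ S → IsClosed I → (0 : A) ∈ I →
    (∀ x ∈ I, ∀ y ∈ I, x + y ∈ I) →
    (∀ x ∈ I, ∀ b ∈ S, x * b ∈ I ∧ b * x ∈ I) →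
    I = {0} ∨ I = S

/-- The intermediate C*-subalgebra `C := C*(B ∪ C_A(B))` generated by `B` and the
centralizer of `B`. -/
def genC (B : Set A) : StarSubalgebra ℂ A :=
  (StarAlgebra.adjoin ℂ (B ∪ cent B)).topologicalClosure

/-- Regularity of the inclusion `B ⊆ A`: the normalizer of `B` generates `A` as a
C*-algebra. -/
def IsRegular (B : Set A) : Prop :=
  (StarAlgebra.adjoin ℂ (normalizer B)).topologicalClosure = ⊤

/-- `E₀` is the minimal conditional expectation of `A` onto `B`: the finite-index
conditional expectation whose (scalar) Watatani index is least among all finite-index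
conditional expectations onto `B`. -/
def IsMinimalCondExp (B : Set A) (E₀ : A →ₗ[ℂ] A) : Prop :=
  IsCondExp B E₀ ∧
  ∃ (r₀ : ℝ) (n : ℕ) (l : Fin n → A), IsRightQB E₀ l ∧
    (∑ i, l i * star (l i)) = (r₀ : ℂ) • 1 ∧
    ∀ E : A →ₗ[ℂ] A, IsCondExp B E → ∀ (m : ℕ) (μ : Fin m → A), IsRightQB E μ →
      ∀ r : ℝ, (∑ i, μ i * star (μ i)) = (r : ℂ) • 1 → r₀ ≤ r

section SimpleCStar

omit [CStarRing A] [CompleteSpace A] in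
lemma IsSimpleCStar.univ {B : StarSubalgebra ℂ A} [CompleteSpace B]
    (hB : IsSimpleCStar (B : Set A)) : IsSimpleCStar (Set.univ : Set B) := by
  intro I _ hI h0 hadd hmul
  have hBclosed : IsClosed (B : Set A) := (completeSpace_coe_iff_isComplete.mp ‹_›).isClosed
  have himage : Subtype.val '' I = {0} ∨ Subtype.val '' I = (B : Set A) := by
    refine hB _ (Subtype.coe_image_subset _ I)
      (hBclosed.isClosedEmbedding_subtypeVal.isClosedMap I hI) ⟨0, h0, rfl⟩ ?_ ?_
    · rintro _ ⟨x, hx, rfl⟩ _ ⟨y, hy, rfl⟩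
      exact ⟨x + y, hadd x hx y hy, rfl⟩
    · rintro _ ⟨x, hx, rfl⟩ b hb
      obtain ⟨hr, hl⟩ := hmul x hx ⟨b, hb⟩ trivial
      exact ⟨⟨_, hr, rfl⟩, ⟨_, hl, rfl⟩⟩
  refine himage.imp (fun h => ?_) fun h => ?_
  · exact Subtype.val_injective.image_injective <| by
      rw [h, Set.image_singleton, ZeroMemClass.coe_zero]
  · exact Subtype.val_injective.image_injective <| by
      rw [h, Set.image_univ, Subtype.range_coe]

omit [StarRing A] [CStarRing A] [NormedAlgebra ℂ A] [StarModule ℂ A] in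
/-- The closure of a proper ideal of a Banach algebra is proper, so it suffices to rule out
closed ideals. -/
lemma IsSimpleCStar.isSimpleRing [Nontrivial A] (hA : IsSimpleCStar (Set.univ : Set A)) :
    IsSimpleRing A := by
  refine ⟨⟨fun I => ?_⟩⟩
  let J : Ideal A := I.asIdeal
  have hright : ∀ x ∈ closure (J : Set A), ∀ b, x * b ∈ closure (J : Set A) := fun x hx b =>
    map_mem_closure (f := (· * b)) (by fun_prop) hx fun y hy => I.mul_mem_right y b hy
  rcases hA J.closure (Set.subset_univ _) isClosed_closure J.closure.zero_mem
    (fun x hx y hy => J.closure.add_mem hx hy)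
    (fun x hx b _ => ⟨hright x hx b, J.closure.mul_mem_left b hx⟩) with h | h
  · refine .inl (le_bot_iff.mp fun x hx => ?_)
    have hx' : x ∈ (J.closure : Set A) := subset_closure hx
    rwa [h] at hx'
  · refine .inr (I.one_mem_iff.mp ?_)
    have hJ : J = ⊤ := by
      by_contra hJ
      exact J.closure_ne_top hJ (SetLike.coe_injective h)
    exact J.eq_top_iff_one.mp hJ

omit [StarRing A] [CStarRing A] [StarModule ℂ A] in
lemma IsSimpleCStar.isCentral (hA : IsSimpleCStar (Set.univ : Set A)) :
    Algebra.IsCentral ℂ A := by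
  refine ⟨fun z hz => ?_⟩
  nontriviality A
  have := hA.isSimpleRing
  obtain ⟨r, hr⟩ := spectrum.nonempty z
  let w : Subring.center A := ⟨algebraMap ℂ A r - z, sub_mem
    (Subalgebra.algebraMap_mem (Subalgebra.center ℂ A) r) hz⟩
  have hw : w = 0 := by
    by_contra hw
    obtain ⟨v, hv⟩ := (IsSimpleRing.isField_center A).mul_inv_cancel hw
    exact hr ((IsUnit.of_mul_eq_one v hv).map (Subring.center A).subtype)
  exact Algebra.mem_bot.mpr ⟨r, sub_eq_zero.mp (congrArg Subtype.val hw)⟩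

open scoped ComplexOrder in
lemma star_mul_self_eq_algebraMap_norm_sq [Algebra.IsCentral ℂ A] {y : A}
    (hy : star y * y ∈ Subalgebra.center ℂ A) :
    star y * y = algebraMap ℂ A (‖y‖ ^ 2) := by
  let : CStarAlgebra A := {}
  let := CStarAlgebra.spectralOrder A
  have := CStarAlgebra.spectralOrderedRing A
  nontriviality A
  obtain ⟨r, hr : algebraMap ℂ A r = star y * y⟩ := Algebra.mem_bot.mp (Algebra.IsCentral.out hy)
  have hr_nonneg : 0 ≤ r := spectrum_nonneg_of_nonneg (star_mul_self_nonneg y) <| by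
    rw [← hr, spectrum.scalar_eq, Set.mem_singleton_iff]
  have hr_norm : ‖r‖ = ‖y‖ ^ 2 := by
    rw [← norm_algebraMap' A r, hr, CStarRing.norm_star_mul_self, sq]
  rw [← hr, Complex.eq_coe_norm_of_nonneg hr_nonneg, hr_norm, Complex.ofReal_pow]

lemma star_mul_self_norm_inv_smul [Algebra.IsCentral ℂ A] {y : A} (hy0 : y ≠ 0)
    (hy : star y * y ∈ Subalgebra.center ℂ A) :
    star ((‖y‖⁻¹ : ℂ) • y) * ((‖y‖⁻¹ : ℂ) • y) = 1 := by
  have hnorm : (‖y‖ : ℂ) ≠ 0 := Complex.ofReal_ne_zero.mpr (norm_ne_zero_iff.mpr hy0)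
  have hscalar : star (‖y‖⁻¹ : ℂ) * (‖y‖⁻¹ : ℂ) * (‖y‖ : ℂ) ^ 2 = 1 := by
    rw [star_inv₀, Complex.star_def, Complex.conj_ofReal]
    field_simp
  rw [star_smul, smul_mul_smul_comm, star_mul_self_eq_algebraMap_norm_sq hy, Algebra.smul_def,
    ← map_mul, hscalar, map_one]

lemma norm_inv_smul_mem_unitary [Algebra.IsCentral ℂ A] {y : A} (hy0 : y ≠ 0)
    (hl : star y * y ∈ Subalgebra.center ℂ A) (hr : y * star y ∈ Subalgebra.center ℂ A) :
    (‖y‖⁻¹ : ℂ) • y ∈ unitary A := by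
  refine Unitary.mem_iff.mpr ⟨star_mul_self_norm_inv_smul hy0 hl, ?_⟩
  simpa using star_mul_self_norm_inv_smul (y := star y) (star_ne_zero.mpr hy0) (by rwa [star_star])

/-- If `y b = σ(b) y`, then `b y* = y* σ(b)`, so `y* y` and `y y*` are central. -/
lemma mem_range_conjStarAlgAut_of_intertwines [Algebra.IsCentral ℂ A] {σ : A ≃⋆ₐ[ℂ] A} {y : A}
    (hy0 : y ≠ 0) (hy : ∀ b, y * b = σ b * y) : σ ∈ (Unitary.conjStarAlgAut ℂ A).range := by
  have hystar (b : A) : b * star y = star y * σ b := by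
    simpa [map_star] using congrArg star (hy (star b))
  have hl : star y * y ∈ Subalgebra.center ℂ A := Subalgebra.mem_center_iff.mpr fun b => by
    rw [← mul_assoc, hystar, mul_assoc, ← hy, mul_assoc]
  have hr : y * star y ∈ Subalgebra.center ℂ A := Subalgebra.mem_center_iff.mpr fun b => by
    obtain ⟨b, rfl⟩ : ∃ c, σ c = b := σ.surjective b
    rw [← mul_assoc, ← hy, mul_assoc, hystar, mul_assoc]
  have hu := norm_inv_smul_mem_unitary hy0 hl hr
  refine ⟨⟨_, hu⟩, StarAlgEquiv.ext fun b => ?_⟩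
  rw [Unitary.conjStarAlgAut_apply, smul_mul_assoc, hy, ← mul_smul_comm, mul_assoc,
    Unitary.mul_star_self_of_mem hu, mul_one]

end SimpleCStar

namespace IsCondExp

section Order

variable [PartialOrder A] [StarOrderedRing A] {B : Set A} {E : A →ₗ[ℂ] A}

/-- A conditional expectation as a bundled positive linear map for the order on `A`; the
definition `IsCondExp` states positivity without an order. -/
noncomputable def toPositiveLinearMap (hE : IsCondExp B E) : A →ₚ[ℂ] A :=
  .mk₀ E fun x hx => by
    let : CStarAlgebra A := {}
    obtain ⟨z, rfl⟩ := CStarAlgebra.nonneg_iff_eq_star_mul_self.mp hx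
    obtain ⟨y, hy⟩ := hE.2.2.1 z
    exact hy ▸ star_mul_self_nonneg y

lemma monotone (hE : IsCondExp B E) : Monotone E :=
  OrderHomClass.mono hE.toPositiveLinearMap

end Order

section Set

variable {B : Set A} {E : A →ₗ[ℂ] A}

lemma continuous (hE : IsCondExp B E) : Continuous E := by
  let : CStarAlgebra A := {}
  let := CStarAlgebra.spectralOrder A
  have := CStarAlgebra.spectralOrderedRing A
  exact map_continuous hE.toPositiveLinearMap

lemma map_star (hE : IsCondExp B E) (x : A) : E (star x) = star (E x) := by
  let : CStarAlgebra A := {}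
  let := CStarAlgebra.spectralOrder A
  have := CStarAlgebra.spectralOrderedRing A
  exact StarHomClass.map_star hE.toPositiveLinearMap x

lemma isClosed (hE : IsCondExp B E) : IsClosed B := by
  have hB : B = {x | E x = x} :=
    Set.ext fun x => ⟨hE.2.1 x, fun hx => hx ▸ hE.1 x⟩
  exact hB ▸ isClosed_eq hE.continuous continuous_id

end Set

variable {B : StarSubalgebra ℂ A} {E : A →ₗ[ℂ] A}

omit [CStarRing A] [CompleteSpace A] in
lemma map_mul_left (hE : IsCondExp (B : Set A) E) {b : A} (hb : b ∈ B) (x : A) :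
    E (b * x) = b * E x := by
  simpa using hE.2.2.2 b hb 1 B.one_mem x

omit [CStarRing A] [CompleteSpace A] in
lemma map_mul_right (hE : IsCondExp (B : Set A) E) {b : A} (hb : b ∈ B) (x : A) :
    E (x * b) = E x * b := by
  simpa using hE.2.2.2 1 B.one_mem b hb x

lemma star_map_mul_map_le [PartialOrder A] [StarOrderedRing A] (hE : IsCondExp (B : Set A) E)
    (x : A) : star (E x) * E x ≤ E (star x * x) := by
  have hvar : E (star (x - E x) * (x - E x)) = E (star x * x) - star (E x) * E x := by
    simp only [star_sub, sub_mul, mul_sub, map_sub, hE.map_mul_left (star_mem (hE.1 x)),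
      hE.map_mul_right (hE.1 x), hE.map_star, hE.2.1 _ (hE.1 x)]
    abel
  have hnonneg : 0 ≤ E (star (x - E x) * (x - E x)) := by
    simpa using hE.monotone (star_mul_self_nonneg (x - E x))
  exact sub_nonneg.mp (hvar ▸ hnonneg)

lemma map_mul_mul_star_nonpos [PartialOrder A] [StarOrderedRing A]
    (hE : IsCondExp (B : Set A) E) {a : A} (ha : E (a * star a) = 0) (x : A) :
    E (a * x * star (a * x)) ≤ 0 := by
  let : CStarAlgebra A := {}
  have hle : a * x * star (a * x) ≤ (‖x‖ ^ 2 : ℝ) • (a * star a) := by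
    have := star_right_conjugate_le_conjugate
      (CStarAlgebra.mul_star_le_algebraMap_norm_sq (a := x)) a
    simpa [mul_assoc, Algebra.algebraMap_eq_smul_one] using this
  refine (hE.monotone hle).trans_eq ?_
  rw [LinearMap.map_smul_of_tower, ha, smul_zero]

lemma map_mul_eq_zero (hE : IsCondExp (B : Set A) E) {a : A} (ha : E (a * star a) = 0) (x : A) :
    E (a * x) = 0 := by
  let : CStarAlgebra A := {}
  let := CStarAlgebra.spectralOrder A
  have := CStarAlgebra.spectralOrderedRing A
  have hle : star (E (star (a * x))) * E (star (a * x)) ≤ 0 := by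
    refine (hE.star_map_mul_map_le _).trans ?_
    rw [star_star]
    exact hE.map_mul_mul_star_nonpos ha x
  have hzero := hle.antisymm (star_mul_self_nonneg _)
  rwa [CStarRing.star_mul_self_eq_zero_iff, hE.map_star, star_eq_zero] at hzero

omit [CStarRing A] [CompleteSpace A] in
lemma map_mul_mul_of_mem_cent (hE : IsCondExp (B : Set A) E) {a b b' c : A} (hb : b ∈ B)
    (hb' : b' ∈ B) (hc : c ∈ cent (B : Set A)) (hab : a * b = b' * a) :
    E (a * c) * b = b' * E (a * c) := by
  rw [← hE.map_mul_right hb, mul_assoc, hc b hb, ← mul_assoc, hab, mul_assoc, hE.map_mul_left hb']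

end IsCondExp

/-- Faithfulness of a positive map `E`: it annihilates no nonzero positive element `x x*`. -/
def IsFaithful (E : A →ₗ[ℂ] A) : Prop :=
  ∀ x, E (x * star x) = 0 → x = 0

lemma IsCondExp.isFaithful {B : StarSubalgebra ℂ A} {E : A →ₗ[ℂ] A}
    (hE : IsCondExp (B : Set A) E) {n : ℕ} {l : Fin n → A} (hl : IsRightQB E l) :
    IsFaithful E := fun x hx => by
  rw [hl x]
  simp only [hE.map_mul_eq_zero hx, zero_mul, Finset.sum_const_zero]

section GenC

omit [CompleteSpace A]

variable (B : StarSubalgebra ℂ A)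

omit [CStarRing A] in
lemma coe_centralizer_eq_cent :
    (StarSubalgebra.centralizer ℂ (B : Set A) : Set A) = cent (B : Set A) := by
  rw [StarSubalgebra.coe_centralizer, StarMemClass.star_coe_eq, Set.union_self]
  exact Set.ext fun x => forall₂_congr fun b _ => eq_comm

lemma le_genC : B ≤ genC (B : Set A) := fun _ hb =>
  StarSubalgebra.le_topologicalClosure _ (StarAlgebra.subset_adjoin ℂ _ (.inl hb))

open scoped TensorProduct in
omit [CStarRing A] in
/-- The multiplication map `C_A(B) ⊗ B → A` is an algebra homomorphism, so its range, the span of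
the products `c b`, is an algebra. -/
lemma adjoin_union_cent_le_span :
    Subalgebra.toSubmodule (StarAlgebra.adjoin ℂ (B ∪ cent (B : Set A))).toSubalgebra ≤
      Submodule.span ℂ (Set.image2 (· * ·) (cent (B : Set A)) B) := by
  rw [← coe_centralizer_eq_cent]
  set Z := StarSubalgebra.centralizer ℂ (B : Set A)
  have hcomm (c : Z) (b : B) : Commute (c : A) b :=
    ((coe_centralizer_eq_cent B).subset c.2) b b.2
  let m : Z ⊗[ℂ] B →ₐ[ℂ] A :=
    Algebra.TensorProduct.lift Z.toSubalgebra.val B.toSubalgebra.val hcomm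
  have hm (c : Z) (b : B) : m (c ⊗ₜ b) = c * b := Algebra.TensorProduct.lift_tmul ..
  have hBZ : (B ∪ Z : Set A) ⊆ m.range := by
    rintro x (hx | hx)
    · exact ⟨1 ⊗ₜ ⟨x, hx⟩, by simp [hm]⟩
    · exact ⟨⟨x, hx⟩ ⊗ₜ 1, by simp [hm]⟩
  have hadjoin : (StarAlgebra.adjoin ℂ (B ∪ Z : Set A)).toSubalgebra ≤ m.range := by
    rw [StarAlgebra.adjoin_toSubalgebra, Set.union_star, StarMemClass.star_coe_eq,
      StarMemClass.star_coe_eq, Set.union_self]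
    exact Algebra.adjoin_le hBZ
  intro x hx
  obtain ⟨t, rfl⟩ := hadjoin hx
  clear hx
  induction t with
  | zero => simp
  | tmul c b => exact Submodule.subset_span ⟨c, c.2, b, b.2, (hm c b).symm⟩
  | add s t hs ht => rw [map_add]; exact add_mem hs ht

variable {B}

lemma mem_of_mem_genC {p : Submodule ℂ A} (hp : IsClosed (p : Set A))
    (hmul : ∀ c ∈ cent (B : Set A), ∀ b ∈ B, c * b ∈ p) {x : A} (hx : x ∈ genC (B : Set A)) :
    x ∈ p :=
  closure_minimal
    ((adjoin_union_cent_le_span B).trans (Submodule.span_le.mpr (Set.image2_subset_iff.mpr hmul)))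
    hp hx

end GenC

/-- The restriction to `S` of a *-automorphism `θ` of `D` with `θ(S) = S`, through which inner and
outer automorphisms of `S` are expressed by `Unitary.conjStarAlgAut`. -/
noncomputable def restrictAut {S D : StarSubalgebra ℂ A} (hSD : S ≤ D) (θ : D ≃⋆ₐ[ℂ] D)
    (hθ : ∀ x : D, (x : A) ∈ S ↔ (θ x : A) ∈ S) : S ≃⋆ₐ[ℂ] S :=
  .ofBijective
    (((D.subtype.comp (θ : D →⋆ₐ[ℂ] D)).comp (StarSubalgebra.inclusion hSD)).codRestrict S
      fun x => (hθ _).mp x.2)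
    ⟨StarAlgHom.injective_codRestrict _ _ _ |>.mpr <| Subtype.val_injective.comp <|
      θ.injective.comp (StarSubalgebra.inclusion_injective hSD),
    fun y => by
      obtain ⟨x, hx⟩ := θ.surjective ⟨y, hSD y.2⟩
      have hxy : (θ x : A) = y := congrArg Subtype.val hx
      exact ⟨⟨x, (hθ x).mpr (hxy ▸ y.2)⟩, Subtype.ext hxy⟩⟩

theorem automorphism_of_genC_outer_on_B_is_free_general
    (B : StarSubalgebra ℂ A) (hBsimple : IsSimpleCStar (B : Set A))
    {E : A →ₗ[ℂ] A} (hE : IsCondExp (B : Set A) E) (hEfaithful : IsFaithful E)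
    {σ : B ≃⋆ₐ[ℂ] B} (hσ : σ ∉ (Unitary.conjStarAlgAut ℂ B).range)
    {a : A} (ha : a ∈ genC (B : Set A)) (haσ : ∀ b : B, a * b = σ b * a) : a = 0 := by
  have : CompleteSpace B := hE.isClosed.completeSpace_coe
  have : Algebra.IsCentral ℂ B := hBsimple.univ.isCentral
  have hcent (c : A) (hc : c ∈ cent (B : Set A)) : E (a * c) = 0 := by
    by_contra hne
    refine hσ (mem_range_conjStarAlgAut_of_intertwines (y := ⟨E (a * c), hE.1 _⟩)
      (fun h => hne (congrArg Subtype.val h)) fun b => Subtype.ext ?_)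
    exact hE.map_mul_mul_of_mem_cent b.2 (σ b).2 hc (haσ b)
  let p : Submodule ℂ A := LinearMap.ker (E ∘ₗ LinearMap.mulLeft ℂ a)
  have hp : IsClosed (p : Set A) :=
    isClosed_singleton.preimage (hE.continuous.comp (continuous_const_mul a))
  have hmul (c : A) (hc : c ∈ cent (B : Set A)) (b : A) (hb : b ∈ B) : E (a * (c * b)) = 0 := by
    rw [← mul_assoc, hE.map_mul_right hb, hcent c hc, zero_mul]
  exact hEfaithful a (mem_of_mem_genC hp hmul (star_mem ha))

/-- for an inclusion `B ⊆ A` of simple unital C*-algebras with a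
finite-index conditional expectation and `C := C*(B ∪ C_A(B))`, any *-automorphism `θ`
of `C` with `θ(B) = B` whose restriction to `B` is outer is a free automorphism of `C`. -/
theorem automorphism_of_genC_outer_on_B_is_free
    (B : StarSubalgebra ℂ A) (hBclosed : IsClosed (B : Set A))
    (hAsimple : IsSimpleCStar (Set.univ : Set A))
    (hBsimple : IsSimpleCStar (B : Set A))
    (E : A →ₗ[ℂ] A) (hE : IsCondExp (B : Set A) E)
    (nE : ℕ) (lE : Fin nE → A) (hlE : IsRightQB E lE)
    (θ : ↥(genC (B : Set A)) ≃⋆ₐ[ℂ] ↥(genC (B : Set A)))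
    (hθB : ∀ x : ↥(genC (B : Set A)), (x : A) ∈ (B : Set A) ↔ ((θ x : A) ∈ (B : Set A)))
    (hθouter : ¬ ∃ u : A, u ∈ (B : Set A) ∧ u ∈ unitary A ∧
        ∀ x : ↥(genC (B : Set A)), (x : A) ∈ (B : Set A) →
          (θ x : A) = u * (x : A) * star u) :
    ∀ a : ↥(genC (B : Set A)), (∀ x : ↥(genC (B : Set A)), a * x = θ x * a) → a = 0 := by
  intro a ha
  have hσ : restrictAut (le_genC B) θ hθB ∉ (Unitary.conjStarAlgAut ℂ B).range := by
    rintro ⟨u, hu⟩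
    refine hθouter ⟨u, u.1.2, Unitary.mem_iff.mpr
      ⟨congrArg Subtype.val (Unitary.coe_star_mul_self u),
        congrArg Subtype.val (Unitary.coe_mul_star_self u)⟩, fun x hx => ?_⟩
    exact congrArg Subtype.val (DFunLike.congr_fun hu ⟨x, hx⟩).symm
  exact Subtype.ext (automorphism_of_genC_outer_on_B_is_free_general B hBsimple hE
    (hE.isFaithful hlE) hσ a.2 fun b => congrArg Subtype.val (ha ⟨b, le_genC B b.2⟩))

end RegularInclusion
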